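/- Let u : A → B be a morphism of noetherian rings, M a finitely generated A-module, N a finitely generated B-module which is flat as an A-module, and n a natural number. Consider M ⊗_A N as a B-module. If M satisfies the condition (C_n) and for every P ∈ Supp(M) the fiber module N_P/PN_P satisfies Serre's condition (S_n) as a module over B_P/PB_P, then M ⊗_A N satisfies the condition (C_n) as a B-module. -/

import Mathlib

noncomputable section

open TensorProduct

universe u v w





/-- The depth of the ideal `I` on the module `M`: the supremum of lengths of
`M`-regular sequences with entries in `I`. -/
noncomputable def idealDepth (A : Type u) [CommRing A] (I : Ideal A)
    (M : Type v) [AddCommGroup M] [Module A M] : ℕ∞ :=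
  sSup {n : ℕ∞ | ∃ rs : List A, (rs.length : ℕ∞) = n ∧ (∀ r ∈ rs, r ∈ I) ∧
    RingTheory.Sequence.IsRegular M rs}

/-- The depth of a module over a local ring. -/
noncomputable def localDepth (A : Type u) [CommRing A] [IsLocalRing A]
    (M : Type v) [AddCommGroup M] [Module A M] : ℕ∞ :=
  idealDepth A (IsLocalRing.maximalIdeal A) M

/-- The (Krull) dimension of a module, i.e. the Krull dimension of its support. -/
noncomputable def supportDim (A : Type u) [CommRing A]
    (M : Type v) [AddCommGroup M] [Module A M] : WithBot ℕ∞ :=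
  Order.krullDim (Module.support A M)

/-- `depth (M_P)` : the depth of the localization of `M` at a prime `P`,
over the local ring `A_P`. -/
noncomputable def depthAt (A : Type u) [CommRing A]
    (M : Type v) [AddCommGroup M] [Module A M] (P : PrimeSpectrum A) : ℕ∞ :=
  localDepth (Localization.AtPrime P.asIdeal) (LocalizedModule P.asIdeal.primeCompl M)

/-- `ht_M(P) = dim (M_P)` : the height of a prime `P` in the support of `M`,
i.e. the dimension of the localized module `M_P` over `A_P`. -/
noncomputable def heightAt (A : Type u) [CommRing A]
    (M : Type v) [AddCommGroup M] [Module A M] (P : PrimeSpectrum A) : WithBot ℕ∞ :=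
  supportDim (Localization.AtPrime P.asIdeal) (LocalizedModule P.asIdeal.primeCompl M)

/-- Serre's condition `(S_n)` for a module: for every `P` in the support,
`depth (M_P) ≥ min (n, ht_M(P))`. -/
def SerreCondS (A : Type u) [CommRing A] (n : ℕ)
    (M : Type v) [AddCommGroup M] [Module A M] : Prop :=
  ∀ P ∈ Module.support A M,
    min (n : WithBot ℕ∞) (heightAt A M P) ≤ (depthAt A M P : WithBot ℕ∞)

/-- The condition `(C_n)` for a module: for every `P` in the support,
`depth (M_P) ≥ min (n, ht_M(P)) - 1`, equivalently
`min (n, ht_M(P)) ≤ depth (M_P) + 1`. -/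
def CondC (A : Type u) [CommRing A] (n : ℕ)
    (M : Type v) [AddCommGroup M] [Module A M] : Prop :=
  ∀ P ∈ Module.support A M,
    min (n : WithBot ℕ∞) (heightAt A M P) ≤ (depthAt A M P : WithBot ℕ∞) + 1

/-- A module `M` is almost Cohen-Macaulay if `depth(P, M) = depth (M_P)` for every
`P` in the support of `M` (Kang's definition). -/
def IsAlmostCMModule (A : Type u) [CommRing A]
    (M : Type v) [AddCommGroup M] [Module A M] : Prop :=
  ∀ P ∈ Module.support A M, idealDepth A P.asIdeal M = depthAt A M P

/-- A module `M` is Cohen-Macaulay if `depth (M_P) = dim (M_P)` for every `P` in its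
support. -/
def IsCMModule (A : Type u) [CommRing A]
    (M : Type v) [AddCommGroup M] [Module A M] : Prop :=
  ∀ P ∈ Module.support A M, (depthAt A M P : WithBot ℕ∞) = heightAt A M P

/-- A ring is almost Cohen-Macaulay if it is an almost Cohen-Macaulay module over
itself. -/
abbrev IsAlmostCMRing (A : Type u) [CommRing A] : Prop := IsAlmostCMModule A A

/-- A ring is Cohen-Macaulay if it is a Cohen-Macaulay module over itself, i.e. all its
localizations at primes have depth equal to dimension. -/
abbrev IsCMRing (A : Type u) [CommRing A] : Prop := IsCMModule A A

/-- A ring satisfies `(C_n)` if it does so as a module over itself. -/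
abbrev RingCondC (A : Type u) [CommRing A] (n : ℕ) : Prop := CondC A n A

/-- A ring satisfies `(S_n)` if it does so as a module over itself. -/
abbrev RingSerreCondS (A : Type u) [CommRing A] (n : ℕ) : Prop := SerreCondS A n A






variable (A : Type u) [CommRing A] (B : Type u) [CommRing B] [Algebra A B]

/-- The image in `B` of the complement of a prime `P` of `A`, as a submonoid of `B`. -/
noncomputable def fiberSubmonoid (P : PrimeSpectrum A) : Submonoid B :=
  Submonoid.map (algebraMap A B) P.asIdeal.primeCompl

/-- `PB_P` : the extension of the prime `P` of `A` to the localization `B_P` of `B`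
at (the image of) the complement of `P`. -/
noncomputable def fiberIdeal (P : PrimeSpectrum A) :
    Ideal (Localization (fiberSubmonoid A B P)) :=
  Ideal.map ((algebraMap B (Localization (fiberSubmonoid A B P))).comp (algebraMap A B))
    P.asIdeal

/-- The fiber ring `B_P / P B_P` of `A → B` at a prime `P` of `A`. -/
noncomputable def fiberRing (P : PrimeSpectrum A) : Type u :=
  Localization (fiberSubmonoid A B P) ⧸ fiberIdeal A B P

noncomputable instance (P : PrimeSpectrum A) : CommRing (fiberRing A B P) :=
  inferInstanceAs (CommRing (Localization (fiberSubmonoid A B P) ⧸ fiberIdeal A B P))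

/-- The fiber module `N_P / P N_P` of a `B`-module `N` at a prime `P` of `A`. -/
noncomputable def fiberModule (P : PrimeSpectrum A)
    (N : Type u) [AddCommGroup N] [Module B N] : Type u :=
  LocalizedModule (fiberSubmonoid A B P) N ⧸
    (fiberIdeal A B P •
      (⊤ : Submodule (Localization (fiberSubmonoid A B P))
        (LocalizedModule (fiberSubmonoid A B P) N)))

noncomputable instance (P : PrimeSpectrum A) (N : Type u) [AddCommGroup N] [Module B N] :
    AddCommGroup (fiberModule A B P N) :=
  inferInstanceAs (AddCommGroup (LocalizedModule (fiberSubmonoid A B P) N ⧸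
    (fiberIdeal A B P •
      (⊤ : Submodule (Localization (fiberSubmonoid A B P))
        (LocalizedModule (fiberSubmonoid A B P) N)))))

/-- `N_P / P N_P` is a module over the fiber ring `B_P / P B_P`. -/
noncomputable instance (P : PrimeSpectrum A) (N : Type u) [AddCommGroup N] [Module B N] :
    Module (fiberRing A B P) (fiberModule A B P N) :=
  inferInstanceAs (Module (Localization (fiberSubmonoid A B P) ⧸ fiberIdeal A B P)
    (LocalizedModule (fiberSubmonoid A B P) N ⧸
      (fiberIdeal A B P •
        (⊤ : Submodule (Localization (fiberSubmonoid A B P))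
          (LocalizedModule (fiberSubmonoid A B P) N)))))








/-- The canonical `B`-module structure on `M ⊗[A] N`, where `N` is a `B`-module,
given by `b • (m ⊗ n) = m ⊗ (b • n)`. -/
noncomputable instance tensorRightModule (A : Type u) [CommRing A] (B : Type u) [CommRing B]
    [Algebra A B] (M : Type u) [AddCommGroup M] [Module A M]
    (N : Type u) [AddCommGroup N] [Module A N] [Module B N] [IsScalarTower A B N] :
    Module B (M ⊗[A] N) where
  smul b x := (TensorProduct.comm A M N).symm (b • TensorProduct.comm A M N x)
  one_smul x := by
    show (TensorProduct.comm A M N).symm ((1 : B) • TensorProduct.comm A M N x) = x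
    simp
  mul_smul a b x := by
    show (TensorProduct.comm A M N).symm ((a * b) • TensorProduct.comm A M N x) =
      (TensorProduct.comm A M N).symm (a • TensorProduct.comm A M N
        ((TensorProduct.comm A M N).symm (b • TensorProduct.comm A M N x)))
    simp [mul_smul]
  smul_zero b := by
    show (TensorProduct.comm A M N).symm (b • TensorProduct.comm A M N 0) = 0
    simp
  smul_add b x y := by
    show (TensorProduct.comm A M N).symm (b • TensorProduct.comm A M N (x + y)) =
      (TensorProduct.comm A M N).symm (b • TensorProduct.comm A M N x) +
      (TensorProduct.comm A M N).symm (b • TensorProduct.comm A M N y)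
    simp
  add_smul a b x := by
    show (TensorProduct.comm A M N).symm ((a + b) • TensorProduct.comm A M N x) =
      (TensorProduct.comm A M N).symm (a • TensorProduct.comm A M N x) +
      (TensorProduct.comm A M N).symm (b • TensorProduct.comm A M N x)
    simp [add_smul]
  zero_smul x := by
    show (TensorProduct.comm A M N).symm ((0 : B) • TensorProduct.comm A M N x) = 0
    simp

section

/-- On `N ⊗[R] M`, scalars act through the left factor unless stated otherwise. -/
local instance tensorLeftModule {R S N M : Type*} [CommSemiring R] [Semiring S] [AddCommMonoid N]
    [AddCommMonoid M] [Module R N] [Module R M] [Module S N] [SMulCommClass R S N] :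
    Module S (N ⊗[R] M) :=
  TensorProduct.leftModule

section
open scoped Pointwise
variable {R S : Type u} [CommRing R] [CommRing S] [Algebra R S]
variable (N : Type u) [AddCommGroup N] [Module R N] [Module S N] [IsScalarTower R S N]
variable (M : Type u) [AddCommGroup M] [Module R M]

/-- Multiplication by `y : S` on `N`, as an `R`-linear map; tensored with `M` it is multiplication
by `y` on `N ⊗[R] M`. -/
lemma rTensor_lsmul_restrictScalars_apply (y : S) (z : N ⊗[R] M) :
    (((LinearMap.lsmul S N y).restrictScalars R).rTensor M) z = y • z := by
  induction z with
  | zero => simp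
  | tmul a b => simp [smul_tmul']
  | add a b ha hb => simp only [map_add, smul_add, ha, hb]

variable {N} in
/-- If `N → Q → 0` has kernel `y N`, then `(N ⊗ M) / y (N ⊗ M) ≃ Q ⊗ M`. -/
noncomputable def quotSMulTopTensorEquivOfExact {Q : Type u} [AddCommGroup Q] [Module R Q]
    [Module S Q] [IsScalarTower R S Q] {y : S} (g : N →ₗ[S] Q) (hg : Function.Surjective g)
    (hyg : Function.Exact (LinearMap.lsmul S N y) g) :
    QuotSMulTop y (N ⊗[R] M) ≃ₗ[S] Q ⊗[R] M := by
  let f : N ⊗[R] M →ₗ[S] Q ⊗[R] M := AlgebraTensorModule.rTensor R M g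
  have hfg (z : N ⊗[R] M) : f z = (g.restrictScalars R).rTensor M z := rfl
  have hf : Function.Surjective f :=
    LinearMap.rTensor_surjective M (g := g.restrictScalars R) hg
  refine (Submodule.quotEquivOfEq _ _ ?_).trans (f.quotKerEquivOfSurjective hf)
  ext z
  have := rTensor_exact M (f := (LinearMap.lsmul S N y).restrictScalars R)
    (g := g.restrictScalars R) hyg hg z
  simp only [Set.mem_range, rTensor_lsmul_restrictScalars_apply] at this
  rw [Submodule.mem_smul_pointwise_iff_exists, LinearMap.mem_ker, hfg, this]
  simp

lemma exact_lsmul_mkQ (y : S) :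
    Function.Exact (LinearMap.lsmul S N y) (y • (⊤ : Submodule S N)).mkQ := by
  intro x
  simp [Submodule.mem_smul_pointwise_iff_exists]

/-- `(N ⊗ M) / y (N ⊗ M) ≃ (N / y N) ⊗ M`. -/
noncomputable def quotSMulTopTensorEquiv (y : S) :
    QuotSMulTop y (N ⊗[R] M) ≃ₗ[S] (QuotSMulTop y N) ⊗[R] M :=
  quotSMulTopTensorEquivOfExact M (y • (⊤ : Submodule S N)).mkQ (Submodule.mkQ_surjective _)
    (exact_lsmul_mkQ N y)

/-- `(N ⊗ M) / x (N ⊗ M) ≃ N ⊗ (M / x M)`. -/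
noncomputable def quotSMulTopAlgebraMapTensorEquiv (x : R) :
    QuotSMulTop (algebraMap R S x) (N ⊗[R] M) ≃ₗ[S] N ⊗[R] (QuotSMulTop x M) := by
  let f : N ⊗[R] M →ₗ[S] N ⊗[R] (QuotSMulTop x M) :=
    AlgebraTensorModule.lTensor S N (x • (⊤ : Submodule R M)).mkQ
  have hfg (z : N ⊗[R] M) : f z = (x • (⊤ : Submodule R M)).mkQ.lTensor N z := rfl
  have hf : Function.Surjective f :=
    LinearMap.lTensor_surjective N (g := (x • (⊤ : Submodule R M)).mkQ)
      (Submodule.mkQ_surjective _)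
  refine (Submodule.quotEquivOfEq _ _ ?_).trans (f.quotKerEquivOfSurjective hf)
  ext z
  have := lTensor_exact N (exact_lsmul_mkQ M x) (Submodule.mkQ_surjective _) z
  have h2 (z : N ⊗[R] M) : (LinearMap.lsmul R M x).lTensor N z = algebraMap R S x • z := by
    induction z with
    | zero => simp
    | tmul a b => simp
    | add a b ha hb => simp only [map_add, smul_add, ha, hb]
  simp only [Set.mem_range, h2] at this
  rw [Submodule.mem_smul_pointwise_iff_exists, LinearMap.mem_ker, hfg, this]
  simp

variable {N}

lemma isSMulRegular_tensor_of_exact [Module.Flat R N] {M₁ M₂ M₃ : Type u}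
    [AddCommGroup M₁] [Module R M₁] [AddCommGroup M₂] [Module R M₂] [AddCommGroup M₃] [Module R M₃]
    {f : M₁ →ₗ[R] M₂} {g : M₂ →ₗ[R] M₃} (hf : Function.Injective f) (hfg : Function.Exact f g)
    {y : S} (h₁ : IsSMulRegular (N ⊗[R] M₁) y) (h₃ : IsSMulRegular (N ⊗[R] M₃) y) :
    IsSMulRegular (N ⊗[R] M₂) y :=
  isSMulRegular_of_range_eq_ker (f := AlgebraTensorModule.lTensor S N f)
    (g := AlgebraTensorModule.lTensor S N g)
    (Module.Flat.lTensor_preserves_injective_linearMap f hf)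
    (by ext z; exact (Module.Flat.lTensor_exact N hfg z).symm) h₁ h₃

lemma finite_tensor [Module.Finite S N] [Module.Finite R M] : Module.Finite S (N ⊗[R] M) :=
  .equiv (AlgebraTensorModule.cancelBaseChange R S S N M)

variable [IsLocalRing R]

open IsLocalRing

lemma isSMulRegular_tensor_of_maximalIdeal_smul_eq_bot {y : S}
    (hy : IsSMulRegular (N ⊗[R] (R ⧸ maximalIdeal R)) y)
    (hM : maximalIdeal R • (⊤ : Submodule R M) = ⊥) : IsSMulRegular (N ⊗[R] M) y := by
  have hT : Module.IsTorsionBySet R M (maximalIdeal R) := by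
    rw [Module.isTorsionBySet_iff_subset_annihilator]
    intro r hr
    rw [SetLike.mem_coe, Module.mem_annihilator]
    intro m
    rw [← Submodule.mem_bot R, ← hM]
    exact Submodule.smul_mem_smul hr trivial
  classical
  let := hT.module
  let : Field (R ⧸ maximalIdeal R) := Ideal.Quotient.field _
  let b := Module.Basis.ofVectorSpace (R ⧸ maximalIdeal R) M
  let e := (b.repr.restrictScalars R)
  let e' := (AlgebraTensorModule.congr (LinearEquiv.refl S N) e).trans
    (finsuppRight R S N (R ⧸ maximalIdeal R) _)
  rw [e'.isSMulRegular_congr]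
  intro a c h
  ext i
  exact hy (DFunLike.congr_fun h i)

lemma isSMulRegular_tensor_of_maximalIdeal_pow_smul_eq_bot [IsNoetherianRing R] [Module.Flat R N] {y : S}
    (hy : IsSMulRegular (N ⊗[R] (R ⧸ maximalIdeal R)) y) (k : ℕ)
    (hM : maximalIdeal R ^ k • (⊤ : Submodule R M) = ⊥) : IsSMulRegular (N ⊗[R] M) y := by
  induction k generalizing M with
  | zero =>
    have : Subsingleton M := by
      rw [← Submodule.subsingleton_iff R, ← subsingleton_iff_bot_eq_top, ← hM]; simp
    exact fun a c _ ↦ Subsingleton.elim _ _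
  | succ k ih =>
    let L : Submodule R M := maximalIdeal R • ⊤
    refine isSMulRegular_tensor_of_exact (f := L.subtype) (g := L.mkQ) L.injective_subtype
      (LinearMap.exact_subtype_mkQ L) (ih _ ?_)
      (isSMulRegular_tensor_of_maximalIdeal_smul_eq_bot _ hy ?_)
    · apply Submodule.map_injective_of_injective L.injective_subtype
      simp [Submodule.map_smul'', L, ← Submodule.mul_smul, ← pow_succ, hM]
    · rw [← Submodule.range_mkQ, ← Submodule.map_top, ← Submodule.map_smul'',
        ← LinearMap.le_ker_iff_map, Submodule.ker_mkQ]

variable [IsLocalRing S] [IsLocalHom (algebraMap R S)] [IsNoetherianRing R] [IsNoetherianRing S]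

lemma isSMulRegular_tensor_of_flat [Module.Finite S N] [Module.Flat R N] [Module.Finite R M] {y : S}
    (hy : IsSMulRegular (N ⊗[R] (R ⧸ maximalIdeal R)) y) : IsSMulRegular (N ⊗[R] M) y := by
  have := finite_tensor (R := R) (S := S) (N := N) M
  refine .of_right_eq_zero_of_smul fun z hz ↦ ?_
  rw [← Submodule.mem_bot S, ← Ideal.iInf_pow_smul_eq_bot_of_isLocalRing (M := N ⊗[R] M)
    (maximalIdeal S) Ideal.IsPrime.ne_top', Submodule.mem_iInf]
  intro k
  let L : Submodule R M := maximalIdeal R ^ k • ⊤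
  have hreg : IsSMulRegular (N ⊗[R] (M ⧸ L)) y :=
    isSMulRegular_tensor_of_maximalIdeal_pow_smul_eq_bot _ hy k (by
      rw [← Submodule.range_mkQ, ← Submodule.map_top, ← Submodule.map_smul'',
        ← LinearMap.le_ker_iff_map, Submodule.ker_mkQ])
  have h0 : AlgebraTensorModule.lTensor S N L.mkQ z = 0 :=
    hreg.right_eq_zero_of_smul (by rw [← map_smul, hz, map_zero])
  obtain ⟨w, rfl⟩ := (lTensor_exact N (LinearMap.exact_subtype_mkQ L) L.mkQ_surjective z).mp h0
  clear hz h0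
  have hpow (r : R) (hr : r ∈ maximalIdeal R ^ k) (z : N ⊗[R] M) :
      r • z ∈ maximalIdeal S ^ k • (⊤ : Submodule S (N ⊗[R] M)) := by
    rw [← algebraMap_smul S r z]
    refine Submodule.smul_mem_smul ?_ trivial
    have := Ideal.mem_map_of_mem (algebraMap R S) hr
    rw [Ideal.map_pow] at this
    exact Ideal.pow_right_mono (((IsLocalRing.local_hom_TFAE (algebraMap R S)).out 0 2).mp
      ‹_›) k this
  induction w with
  | zero => simp
  | add a b ha hb => rw [map_add]; exact add_mem ha hb
  | tmul a b =>
    obtain ⟨b, hb⟩ := b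
    rw [LinearMap.lTensor_tmul, Submodule.subtype_apply]
    induction hb using Submodule.smul_induction_on' with
    | smul r hr m hm => rw [tmul_smul]; exact hpow r hr _
    | add x hx y hy h1 h2 => rw [tmul_add]; exact add_mem h1 h2

lemma flat_of_exact_lsmul [Module.Finite S N] [Module.Flat R N] {y : S}
    (hy : IsSMulRegular (N ⊗[R] (R ⧸ maximalIdeal R)) y) {Q : Type u} [AddCommGroup Q] [Module R Q]
    [Module S Q] [IsScalarTower R S Q] (g : N →ₗ[S] Q) (hg : Function.Surjective g)
    (hyg : Function.Exact (LinearMap.lsmul S N y) g) : Module.Flat R Q := by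
  rw [Module.Flat.iff_lTensor_injective']
  intro I
  refine lTensor_injective_of_exact_of_exact_of_rTensor_injective
    (f₁ := (LinearMap.lsmul S N y).restrictScalars R) (f₂ := g.restrictScalars R) hyg hg
    (LinearMap.exact_subtype_mkQ I) I.mkQ_surjective ?_
    (Module.Flat.lTensor_preserves_injective_linearMap _ I.injective_subtype)
  intro a b h
  rw [rTensor_lsmul_restrictScalars_apply, rTensor_lsmul_restrictScalars_apply] at h
  exact isSMulRegular_tensor_of_flat _ hy h

open RingTheory.Sequence

lemma isWeaklyRegular_tensor_of_fiber [Module.Finite S N] [Module.Flat R N] [Module.Finite R M]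
    {ys : List S} (hys : IsWeaklyRegular (N ⊗[R] (R ⧸ maximalIdeal R)) ys) :
    IsWeaklyRegular (N ⊗[R] M) ys := by
  induction ys generalizing N with
  | nil => simp
  | cons y ys ih =>
    rw [isWeaklyRegular_cons_iff] at hys ⊢
    have := flat_of_exact_lsmul hys.1 _ (Submodule.mkQ_surjective _) (exact_lsmul_mkQ N y)
    refine ⟨isSMulRegular_tensor_of_flat M hys.1, ?_⟩
    rw [(quotSMulTopTensorEquiv N M y).isWeaklyRegular_congr]
    exact ih (((quotSMulTopTensorEquiv N _ y).isWeaklyRegular_congr _).mp hys.2)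

/-- A regular sequence on the base module followed by (lifts of) a regular sequence on the closed
fiber is a regular sequence on the tensor product. -/
lemma isWeaklyRegular_tensor_append [Module.Finite S N] [Module.Flat R N] [Module.Finite R M]
    {xs : List R} (hxs : IsWeaklyRegular M xs)
    {ys : List S} (hys : IsWeaklyRegular (N ⊗[R] (R ⧸ maximalIdeal R)) ys) :
    IsWeaklyRegular (N ⊗[R] M) (xs.map (algebraMap R S) ++ ys) := by
  induction xs generalizing M with
  | nil => simpa using isWeaklyRegular_tensor_of_fiber M hys
  | cons x xs ih =>
    rw [isWeaklyRegular_cons_iff] at hxs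
    rw [List.map_cons, List.cons_append, isWeaklyRegular_cons_iff]
    refine ⟨?_, ?_⟩
    · have := IsSMulRegular.lTensor N hxs.1
      intro a b h
      simp only [algebraMap_smul] at h
      exact this h
    · rw [(quotSMulTopAlgebraMapTensorEquiv N M x).isWeaklyRegular_congr]
      exact ih _ hxs.2

end

section
open IsLocalRing RingTheory.Sequence

lemma localDepth_congr {R : Type u} [CommRing R] [IsLocalRing R] {M M' : Type u} [AddCommGroup M]
    [Module R M] [AddCommGroup M'] [Module R M'] (e : M ≃ₗ[R] M') :
    localDepth R M = localDepth R M' := by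
  simp only [localDepth, idealDepth, e.isRegular_congr]

variable {R S T : Type u} [CommRing R] [CommRing S] [CommRing T] [Algebra R S] [Algebra S T]
  {N : Type u} [AddCommGroup N] [Module R N] [Module S N] [IsScalarTower R S N]
  {M : Type u} [AddCommGroup M] [Module R M]
  {K : Type u} [AddCommGroup K] [Module S K] [Module T K] [IsScalarTower S T K]

lemma supportDim_eq_of_surjective (hST : Function.Surjective (algebraMap S T)) [Module.Finite S K] :
    supportDim S K = supportDim T K := by
  have : Module.Finite T K := .of_restrictScalars_finite S T K
  let f := (Ideal.Quotient.mk (Module.annihilator T K)).comp (algebraMap S T)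
  have hf : Function.Surjective f := Ideal.Quotient.mk_surjective.comp hST
  have hker : RingHom.ker f = Module.annihilator S K := by
    ext s
    rw [RingHom.mem_ker, RingHom.comp_apply, Ideal.Quotient.eq_zero_iff_mem]
    simp [Module.mem_annihilator]
  calc supportDim S K = ringKrullDim (S ⧸ Module.annihilator S K) :=
        Module.supportDim_eq_ringKrullDim_quotient_annihilator S K
    _ = ringKrullDim (T ⧸ Module.annihilator T K) := by
        rw [← hker]
        exact ringKrullDim_eq_of_ringEquiv (RingHom.quotientKerEquivOfSurjective hf)
    _ = supportDim T K := (Module.supportDim_eq_ringKrullDim_quotient_annihilator T K).symm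

variable (S N) in
/-- `N ⊗ R/I ≃ N / (I S) N`. -/
def tensorQuotientEquiv (I : Ideal R) :
    N ⊗[R] (R ⧸ I) ≃ₗ[S] N ⧸ (I.map (algebraMap R S) • (⊤ : Submodule S N)) :=
  (AlgebraTensorModule.cancelBaseChange R S S N (R ⧸ I)).symm ≪≫ₗ
    AlgebraTensorModule.congr (.refl S N)
      (Algebra.TensorProduct.quotIdealMapEquivTensorQuot S I).symm.toLinearEquiv ≪≫ₗ
    tensorQuotEquivQuotSMul N _

variable [IsLocalRing R] [IsLocalRing S] [IsLocalHom (algebraMap R S)]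
  [IsNoetherianRing R] [IsNoetherianRing S] [Module.Finite S N] [Module.Finite R M]

lemma localDepth_add_localDepth_le_localDepth_tensor
    (e : K ≃ₗ[S] N ⧸ ((maximalIdeal R).map (algebraMap R S) • (⊤ : Submodule S N)))
    (hST : Function.Surjective (algebraMap S T)) [IsLocalRing T] [Module.Flat R N]
    [Nontrivial M] [Nontrivial K] [Nontrivial (N ⊗[R] M)] :
    localDepth R M + localDepth T K ≤ localDepth S (N ⊗[R] M) := by
  have : IsLocalHom (algebraMap S T) := .of_surjective _ hST
  have : Module.Finite S (N ⊗[R] M) := finite_tensor M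
  have : Module.Finite S K := .equiv e.symm
  have : Module.Finite T K := .of_restrictScalars_finite S T K
  have nil_mem (R : Type u) [CommRing R] [IsLocalRing R] (M : Type u) [AddCommGroup M] [Module R M]
      [Module.Finite R M] [Nontrivial M] : {n : ℕ∞ | ∃ rs : List R, (rs.length : ℕ∞) = n ∧
        (∀ r ∈ rs, r ∈ maximalIdeal R) ∧ RingTheory.Sequence.IsRegular M rs}.Nonempty :=
    ⟨0, [], by simp, by simp, .of_isWeaklyRegular_of_mem_maximalIdeal _ (by simp) (by simp)⟩
  unfold localDepth idealDepth
  rw [ENat.sSup_add (nil_mem R M)]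
  refine iSup₂_le ?_
  rintro _ ⟨xs, rfl, hxs, hreg⟩
  rw [ENat.add_sSup (nil_mem T K)]
  refine iSup₂_le ?_
  rintro _ ⟨zs, rfl, hzs, hreg'⟩
  obtain ⟨ys, rfl⟩ : ∃ ys : List S, ys.map (algebraMap S T) = zs :=
    (List.map_surjective_iff.mpr hST) zs
  have key : ∀ r ∈ xs.map (algebraMap R S) ++ ys, r ∈ maximalIdeal S := by
    intro r hr
    rw [List.mem_append, List.mem_map] at hr
    obtain ⟨x, hx, rfl⟩ | hr := hr
    · exact map_nonunit _ _ (hxs x hx)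
    · exact fun hu ↦ hzs _ (List.mem_map_of_mem hr) (hu.map _)
  refine le_sSup ⟨xs.map (algebraMap R S) ++ ys, by simp, key, ?_⟩
  refine .of_isWeaklyRegular_of_mem_maximalIdeal _ key
    (isWeaklyRegular_tensor_append M hreg.toIsWeaklyRegular ?_)
  rw [← (e ≪≫ₗ (tensorQuotientEquiv S N (maximalIdeal R)).symm).isWeaklyRegular_congr,
    ← isWeaklyRegular_map_algebraMap_iff T]
  exact hreg'.toIsWeaklyRegular

lemma supportDim_tensor_le
    (e : K ≃ₗ[S] N ⧸ ((maximalIdeal R).map (algebraMap R S) • (⊤ : Submodule S N)))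
    (hST : Function.Surjective (algebraMap S T))
    [Nontrivial M] [Nontrivial (N ⊗[R] M)] :
    supportDim S (N ⊗[R] M) ≤ supportDim R M + supportDim T K := by
  have : Module.Finite S (N ⊗[R] M) := finite_tensor M
  have : Module.Finite S K := .equiv e.symm
  set I := Module.annihilator R M
  set J := Module.annihilator S (N ⊗[R] M)
  have hIJ : I ≤ J.comap (algebraMap R S) := by
    intro r hr
    rw [Ideal.mem_comap, Module.mem_annihilator]
    intro z
    rw [algebraMap_smul]
    induction z with
    | zero => simp
    | tmul a b => rw [← tmul_smul, Module.mem_annihilator.mp hr b, tmul_zero]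
    | add a b ha hb => rw [smul_add, ha, hb, add_zero]
  let : Algebra (R ⧸ I) (S ⧸ J) := (Ideal.quotientMap J (algebraMap R S) hIJ).toAlgebra
  have hI : Nontrivial (R ⧸ I) := Ideal.Quotient.nontrivial_iff.mpr
    ((Module.annihilator_eq_top_iff (R := R)).not.mpr (not_subsingleton M))
  have hJ : Nontrivial (S ⧸ J) := Ideal.Quotient.nontrivial_iff.mpr
    ((Module.annihilator_eq_top_iff (R := S)).not.mpr (not_subsingleton (N ⊗[R] M)))
  have : IsLocalRing (R ⧸ I) := .of_surjective' _ Ideal.Quotient.mk_surjective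
  have : IsLocalRing (S ⧸ J) := .of_surjective' _ Ideal.Quotient.mk_surjective
  have : IsLocalHom (Ideal.Quotient.mk J) := .of_surjective _ Ideal.Quotient.mk_surjective
  have : IsLocalHom (Ideal.Quotient.mk I) := .of_surjective _ Ideal.Quotient.mk_surjective
  have : IsLocalHom (algebraMap (R ⧸ I) (S ⧸ J)) := by
    have : IsLocalHom ((algebraMap (R ⧸ I) (S ⧸ J)).comp (Ideal.Quotient.mk I)) :=
      inferInstanceAs (IsLocalHom ((Ideal.Quotient.mk J).comp (algebraMap R S)))
    refine ⟨fun a ha ↦ ?_⟩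
    obtain ⟨a, rfl⟩ := Ideal.Quotient.mk_surjective a
    exact (isUnit_of_map_unit ((algebraMap (R ⧸ I) (S ⧸ J)).comp (Ideal.Quotient.mk I)) a ha).map _
  have : (maximalIdeal (S ⧸ J)).LiesOver (maximalIdeal (R ⧸ I)) :=
    ⟨(IsLocalRing.maximalIdeal_comap _).symm⟩
  have h := Ideal.height_le_height_add_of_liesOver (maximalIdeal (R ⧸ I)) (maximalIdeal (S ⧸ J))
  set L := Ideal.map (algebraMap (R ⧸ I) (S ⧸ J)) (maximalIdeal (R ⧸ I))
  have hfib : ringKrullDim ((S ⧸ J) ⧸ L) ≤ supportDim S K := by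
    let f := (Ideal.Quotient.mk L).comp (Ideal.Quotient.mk J)
    have hf : Function.Surjective f := Ideal.Quotient.mk_surjective.comp Ideal.Quotient.mk_surjective
    have hmem (p : PrimeSpectrum ((S ⧸ J) ⧸ L)) : p.comap f ∈ Module.support S K := by
      rw [e.support_eq, Module.support_quotient, Module.support_eq_zeroLocus]
      have hle {s : S} (hs : f s = 0) : s ∈ (p.comap f).asIdeal := by
        rw [PrimeSpectrum.comap_asIdeal, Ideal.mem_comap, hs]
        exact zero_mem _
      refine ⟨fun s hs ↦ hle ?_, ?_⟩
      · have : s ∈ J := by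
          rw [Module.mem_annihilator]
          intro z
          induction z with
          | zero => simp
          | tmul a b => rw [smul_tmul', Module.mem_annihilator.mp hs a, zero_tmul]
          | add a b ha hb => rw [smul_add, ha, hb, add_zero]
        rw [RingHom.comp_apply, Ideal.Quotient.eq_zero_iff_mem.mpr this, map_zero]
      · rw [PrimeSpectrum.mem_zeroLocus, SetLike.coe_subset_coe, Ideal.map_le_iff_le_comap]
        intro r hr
        refine hle (Ideal.Quotient.eq_zero_iff_mem.mpr ?_)
        exact Ideal.mem_map_of_mem (algebraMap (R ⧸ I) (S ⧸ J))
          (map_nonunit (Ideal.Quotient.mk I) r hr)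
    exact Order.krullDim_le_of_strictMono (fun p ↦ ⟨p.comap f, hmem p⟩)
      fun p q hpq ↦ RingHom.strictMono_comap_of_surjective hf hpq
  rw [← supportDim_eq_of_surjective hST]
  calc supportDim S (N ⊗[R] M) = ringKrullDim (S ⧸ J) :=
        Module.supportDim_eq_ringKrullDim_quotient_annihilator S _
    _ = (maximalIdeal (S ⧸ J)).height := IsLocalRing.maximalIdeal_height_eq_ringKrullDim.symm
    _ ≤ (maximalIdeal (R ⧸ I)).height +
          ((Ideal.map (Ideal.Quotient.mk L) (maximalIdeal (S ⧸ J))).height : WithBot ℕ∞) := by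
        exact_mod_cast h
    _ ≤ ringKrullDim (R ⧸ I) + ringKrullDim ((S ⧸ J) ⧸ L) := by
        rw [IsLocalRing.maximalIdeal_height_eq_ringKrullDim]
        have := Ideal.map_isPrime_of_surjective (Ideal.Quotient.mk_surjective (I := L))
          (I := maximalIdeal (S ⧸ J)) (by rw [Ideal.mk_ker]; exact map_maximalIdeal_le _)
        gcongr
        exact Ideal.height_le_ringKrullDim_of_isPrime
    _ ≤ supportDim R M + supportDim S K :=
        add_le_add (Module.supportDim_eq_ringKrullDim_quotient_annihilator R M).ge hfib

end

section
variable {A B R S T F : Type u} [CommRing A] [CommRing B] [CommRing R] [CommRing S]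
  [CommRing T] [CommRing F]
  [Algebra A B] [Algebra A R] [Algebra A S] [Algebra B S] [Algebra R S] [Algebra B F]
  [IsScalarTower A B S] [IsScalarTower A R S]
  {N : Type u} [AddCommGroup N] [Module A N] [Module B N] [IsScalarTower A B N]
  {M : Type u} [AddCommGroup M] [Module A M]

variable (A B R S M N) in
/-- Base change of `N ⊗[A] M` along `B → S`, where `A → S` factors through `R`. -/
def tensorBaseChangeEquiv [SMulCommClass B R S] :
    (S ⊗[B] N) ⊗[R] (R ⊗[A] M) ≃ₗ[S] S ⊗[B] (N ⊗[A] M) :=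
  AlgebraTensorModule.cancelBaseChange A R S (S ⊗[B] N) M ≪≫ₗ
    AlgebraTensorModule.assoc A B S S N M

lemma flat_tensor_of_flat [Module.Flat B S] [Module.Flat A N] : Module.Flat A (S ⊗[B] N) := by
  rw [Module.Flat.iff_lTensor_preserves_injective_linearMap]
  intro X Y _ _ _ _ f hf
  let e (X : Type u) [AddCommGroup X] [Module A X] := AlgebraTensorModule.assoc A B S S N X
  have h : ⇑(e Y) ∘ ⇑(f.lTensor (S ⊗[B] N)) =
      ⇑((AlgebraTensorModule.lTensor B N f).lTensor S) ∘ ⇑(e X) := by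
    ext z
    simp only [Function.comp_apply]
    induction z with
    | zero => simp
    | add a b ha hb => simp only [map_add, ha, hb]
    | tmul a x =>
      induction a with
      | zero => simp
      | add a b ha hb => simp only [add_tmul, map_add, ha, hb]
      | tmul s n => simp [e]
  have hinj := Module.Flat.lTensor_preserves_injective_linearMap (M := S)
    (AlgebraTensorModule.lTensor B N f) (Module.Flat.lTensor_preserves_injective_linearMap f hf)
  exact Function.Injective.of_comp (f := e Y) (h ▸ hinj.comp (e X).injective)

section fiber

variable (p : Ideal A) (Q : Ideal B) [Q.IsPrime] [IsLocalization.AtPrime S Q]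
  (q : Ideal F) [q.IsPrime] [Algebra F T] [IsLocalization.AtPrime T q]
  [Algebra S T] [Algebra B T] [IsScalarTower B F T] [IsScalarTower B S T]

lemma algebraMap_surjective_of_fiber (hq : q.comap (algebraMap B F) = Q)
    (hsurj : ∀ f : F, ∃ b w : B, IsUnit (algebraMap B F w) ∧ f * algebraMap B F w = algebraMap B F b) :
    Function.Surjective (algebraMap S T) := by
  intro t
  obtain ⟨⟨f, c⟩, hfc⟩ := IsLocalization.surj q.primeCompl t
  obtain ⟨b₁, w₁, hw₁, h₁⟩ := hsurj f
  obtain ⟨b₂, w₂, hw₂, h₂⟩ := hsurj c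
  have hmem : b₂ * w₁ ∈ Q.primeCompl := by
    rw [Ideal.mem_primeCompl_iff, ← hq, Ideal.mem_comap, map_mul, ← h₂, Ideal.mul_unit_mem_iff_mem q hw₁,
      Ideal.mul_unit_mem_iff_mem q hw₂]
    exact c.2
  refine ⟨IsLocalization.mk' S (b₁ * w₂) ⟨b₂ * w₁, hmem⟩, ?_⟩
  have hunit : IsUnit (algebraMap B T (b₂ * w₁)) := by
    rw [IsScalarTower.algebraMap_apply B S T]
    exact (IsLocalization.map_units S (⟨b₂ * w₁, hmem⟩ : Q.primeCompl)).map _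
  refine hunit.mul_right_cancel ?_
  have hmk := IsLocalization.mk'_spec S (b₁ * w₂) (⟨b₂ * w₁, hmem⟩ : Q.primeCompl)
  dsimp only at hmk hfc
  rw [IsScalarTower.algebraMap_apply B S T, ← map_mul, hmk, ← IsScalarTower.algebraMap_apply,
    ← IsScalarTower.algebraMap_apply, IsScalarTower.algebraMap_apply B F T,
    IsScalarTower.algebraMap_apply B F T, map_mul (algebraMap B F), map_mul (algebraMap B F), ← h₁,
    ← h₂]
  simp only [map_mul, ← hfc]
  ring

lemma ker_algebraMap_of_fiber (hq : q.comap (algebraMap B F) = Q)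
    (hsurj : ∀ f : F, ∃ b w : B, IsUnit (algebraMap B F w) ∧ f * algebraMap B F w = algebraMap B F b)
    (hker : ∀ b : B, algebraMap B F b = 0 →
      ∃ w : B, IsUnit (algebraMap B F w) ∧ w * b ∈ p.map (algebraMap A B))
    (hp : ∀ a ∈ p, algebraMap B F (algebraMap A B a) = 0) :
    RingHom.ker (algebraMap S T) = p.map (algebraMap A S) := by
  apply le_antisymm
  · intro s hs
    obtain ⟨b, c, rfl⟩ := IsLocalization.exists_mk'_eq Q.primeCompl s
    have hb : algebraMap F T (algebraMap B F b) = 0 := by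
      rw [← IsScalarTower.algebraMap_apply, IsScalarTower.algebraMap_apply B S T,
        ← IsLocalization.mk'_spec S b c, map_mul, RingHom.mem_ker.mp hs, zero_mul]
    obtain ⟨d, hd⟩ := (IsLocalization.map_eq_zero_iff q.primeCompl T _).mp hb
    obtain ⟨b₂, w₂, hw₂, h₂⟩ := hsurj d
    obtain ⟨w, hw, hwb⟩ := hker (b₂ * b) (by rw [map_mul, ← h₂, mul_right_comm, hd, zero_mul])
    have hmem : w * b₂ ∈ Q.primeCompl := by
      rw [Ideal.mem_primeCompl_iff, ← hq, Ideal.mem_comap, map_mul, ← h₂, Ideal.unit_mul_mem_iff_mem q hw,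
        Ideal.mul_unit_mem_iff_mem q hw₂]
      exact d.2
    have h := Ideal.mem_map_of_mem (algebraMap B S) hwb
    rw [Ideal.map_map, ← IsScalarTower.algebraMap_eq, ← mul_assoc, map_mul,
      Ideal.unit_mul_mem_iff_mem _ (IsLocalization.map_units S (⟨_, hmem⟩ : Q.primeCompl)),
      ← IsLocalization.mk'_spec S b c, Ideal.mul_unit_mem_iff_mem _ (IsLocalization.map_units S c)] at h
    exact h
  · rw [Ideal.map_le_iff_le_comap]
    intro a ha
    rw [Ideal.mem_comap, RingHom.mem_ker, IsScalarTower.algebraMap_apply A B S,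
      ← IsScalarTower.algebraMap_apply B S T, IsScalarTower.algebraMap_apply B F T, hp a ha, map_zero]

end fiber

variable [Algebra S T] in
/-- If `S → T` is surjective with kernel `I`, then `T ⊗ N ≃ N / I N`. -/
def tensorEquivQuotientOfSurjective (hST : Function.Surjective (algebraMap S T)) {I : Ideal S}
    (hI : RingHom.ker (algebraMap S T) = I) (N : Type u) [AddCommGroup N] [Module S N] :
    T ⊗[S] N ≃ₗ[S] N ⧸ (I • (⊤ : Submodule S N)) :=
  TensorProduct.congr ((Submodule.quotEquivOfEq _ _ (by rw [← hI]; rfl)) ≪≫ₗ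
      (Algebra.linearMap S T).quotKerEquivOfSurjective hST).symm (.refl S N) ≪≫ₗ
    quotTensorEquivQuotSMul N I

end

section
variable {A B : Type u} [CommRing A] [CommRing B] [Algebra A B] (P : PrimeSpectrum A)

lemma fiberIdeal_eq_map : fiberIdeal A B P =
    (P.asIdeal.map (algebraMap A B)).map (algebraMap B (Localization (fiberSubmonoid A B P))) := by
  rw [fiberIdeal, Ideal.map_map]

lemma isUnit_algebraMap_quotient_fiberIdeal (w : fiberSubmonoid A B P) :
    IsUnit (algebraMap B (Localization (fiberSubmonoid A B P) ⧸ fiberIdeal A B P) w) :=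
  (IsLocalization.map_units (Localization (fiberSubmonoid A B P)) w).map (Ideal.Quotient.mk _)

lemma exists_mul_algebraMap_quotient_fiberIdeal
    (f : Localization (fiberSubmonoid A B P) ⧸ fiberIdeal A B P) :
    ∃ b w : B, IsUnit (algebraMap B (Localization (fiberSubmonoid A B P) ⧸ fiberIdeal A B P) w) ∧
      f * algebraMap B _ w = algebraMap B _ b := by
  obtain ⟨f, rfl⟩ := Ideal.Quotient.mk_surjective f
  obtain ⟨⟨b, w⟩, h⟩ := IsLocalization.surj (fiberSubmonoid A B P) f
  exact ⟨b, w, isUnit_algebraMap_quotient_fiberIdeal P w, congrArg (Ideal.Quotient.mk _) h⟩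

lemma exists_mul_mem_map_of_algebraMap_quotient_fiberIdeal_eq_zero (b : B)
    (hb : algebraMap B (Localization (fiberSubmonoid A B P) ⧸ fiberIdeal A B P) b = 0) :
    ∃ w : B, IsUnit (algebraMap B (Localization (fiberSubmonoid A B P) ⧸ fiberIdeal A B P) w) ∧
      w * b ∈ P.asIdeal.map (algebraMap A B) := by
  replace hb := Ideal.Quotient.eq_zero_iff_mem.mp hb
  rw [fiberIdeal_eq_map, IsLocalization.algebraMap_mem_map_algebraMap_iff
    (fiberSubmonoid A B P)] at hb
  obtain ⟨w, hw, h⟩ := hb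
  exact ⟨w, isUnit_algebraMap_quotient_fiberIdeal P ⟨w, hw⟩, h⟩

lemma algebraMap_quotient_fiberIdeal_eq_zero {a : A} (ha : a ∈ P.asIdeal) :
    algebraMap B (Localization (fiberSubmonoid A B P) ⧸ fiberIdeal A B P) (algebraMap A B a) = 0 :=
  Ideal.Quotient.eq_zero_iff_mem.mpr (Ideal.mem_map_of_mem _ ha)

lemma exists_comap_quotient_fiberIdeal_eq (Q : PrimeSpectrum B) :
    ∃ q : PrimeSpectrum (Localization (fiberSubmonoid A B (Q.comap (algebraMap A B))) ⧸
        fiberIdeal A B (Q.comap (algebraMap A B))),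
      q.asIdeal.comap (algebraMap B _) = Q.asIdeal := by
  set P := Q.comap (algebraMap A B)
  set W := fiberSubmonoid A B P
  have hdisj : Disjoint (W : Set B) Q.asIdeal := by
    rw [Set.disjoint_left]
    rintro _ ⟨a, ha, rfl⟩ h
    exact ha h
  set J := Q.asIdeal.map (algebraMap B (Localization W))
  have hJ : J.IsPrime := IsLocalization.isPrime_of_isPrime_disjoint W _ _ Q.2 hdisj
  have hle : fiberIdeal A B P ≤ J := by
    rw [fiberIdeal_eq_map]
    exact Ideal.map_mono Ideal.map_comap_le
  refine ⟨⟨J.map (Ideal.Quotient.mk _), Ideal.map_isPrime_of_surjective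
    Ideal.Quotient.mk_surjective (by rwa [Ideal.mk_ker])⟩, ?_⟩
  rw [IsScalarTower.algebraMap_eq B (Localization W), ← Ideal.comap_comap,
    Ideal.Quotient.algebraMap_eq, Ideal.comap_map_mk hle]
  exact IsLocalization.under_map_of_isPrime_disjoint W _ Q.2 hdisj

variable (N : Type u) [AddCommGroup N] [Module B N]

/-- `N_P / P N_P` is the base change of `N` to the fiber ring. -/
def tensorEquivFiberModule : (Localization (fiberSubmonoid A B P) ⧸ fiberIdeal A B P) ⊗[B] N
    ≃ₗ[Localization (fiberSubmonoid A B P) ⧸ fiberIdeal A B P]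
    LocalizedModule (fiberSubmonoid A B P) N ⧸ (fiberIdeal A B P •
      (⊤ : Submodule (Localization (fiberSubmonoid A B P))
        (LocalizedModule (fiberSubmonoid A B P) N))) :=
  (AlgebraTensorModule.cancelBaseChange B (Localization (fiberSubmonoid A B P)) _ _ N).symm ≪≫ₗ
    AlgebraTensorModule.congr (.refl _ _)
      (LocalizedModule.equivTensorProduct (fiberSubmonoid A B P) N).symm ≪≫ₗ
    (quotTensorEquivQuotSMul _ _).extendScalarsOfSurjective Ideal.Quotient.mk_surjective

end

section
open IsLocalRing

lemma CondC.congr {B : Type u} [CommRing B] {n : ℕ} {M M' : Type u} [AddCommGroup M] [Module B M]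
    [AddCommGroup M'] [Module B M'] (e : M ≃ₗ[B] M') (h : CondC B n M) : CondC B n M' := by
  intro Q hQ
  rw [← e.support_eq] at hQ
  have := h Q hQ
  let e' : LocalizedModule Q.asIdeal.primeCompl M ≃ₗ[Localization.AtPrime Q.asIdeal]
    LocalizedModule Q.asIdeal.primeCompl M' := (LocalizedModule.equivTensorProduct _ _) ≪≫ₗ
      AlgebraTensorModule.congr (.refl _ _) e ≪≫ₗ (LocalizedModule.equivTensorProduct _ _).symm
  rwa [heightAt, depthAt, localDepth_congr e',
    show supportDim _ _ = supportDim _ _ from Module.supportDim_eq_of_equiv e'] at this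

/-- Numerical comparison behind the ascent of `(C_n)`. -/
lemma min_le_add_one_of_le_add {n : ℕ} {h h₁ h₂ : WithBot ℕ∞} {d d₁ d₂ : ℕ∞} (hh : h ≤ h₁ + h₂)
    (hd : d₁ + d₂ ≤ d) (h0₁ : 0 ≤ h₁) (h0₂ : 0 ≤ h₂)
    (h₁d : min (n : WithBot ℕ∞) h₁ ≤ d₁ + 1) (h₂d : min (n : WithBot ℕ∞) h₂ ≤ d₂) :
    min (n : WithBot ℕ∞) h ≤ d + 1 := by
  have hn : (0 : WithBot ℕ∞) ≤ n := by exact_mod_cast zero_le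
  calc min (n : WithBot ℕ∞) h ≤ min (n : WithBot ℕ∞) h₁ + min (n : WithBot ℕ∞) h₂ := by
        rcases le_total (n : WithBot ℕ∞) h₁ with h | h
        · rw [min_eq_left h]
          exact (min_le_left _ _).trans (le_add_of_nonneg_right (le_min hn h0₂))
        rcases le_total (n : WithBot ℕ∞) h₂ with h' | h'
        · rw [min_eq_left h']
          exact (min_le_left _ _).trans (le_add_of_nonneg_left (le_min hn h0₁))
        · rw [min_eq_right h, min_eq_right h']
          exact (min_le_right _ _).trans hh
    _ ≤ (d₁ + 1) + d₂ := add_le_add h₁d h₂d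
    _ = ((d₁ + d₂ : ℕ∞) : WithBot ℕ∞) + 1 := by push_cast; exact add_right_comm _ _ _
    _ ≤ d + 1 := by gcongr; exact_mod_cast hd

variable {A B : Type u} [CommRing A] [CommRing B] [IsNoetherianRing A] [IsNoetherianRing B]
  [Algebra A B] {n : ℕ} {M : Type u} [AddCommGroup M] [Module A M] [Module.Finite A M]
  {N : Type u} [AddCommGroup N] [Module A N] [Module B N] [IsScalarTower A B N]
  [Module.Finite B N] [Module.Flat A N]

/-- The local comparison of dimensions and depths for `N ⊗[A] M` at a prime `Q` of `B` lying over
`P`, where `F` is a fiber ring at `P`, the module `N'` is the base change of `N` to `F`, and `q` is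
the prime of `F` corresponding to `Q`. -/
lemma heightAt_le_and_le_depthAt_of_fiber (Q : PrimeSpectrum B) (P : PrimeSpectrum A)
    (hPQ : P.asIdeal = Q.asIdeal.comap (algebraMap A B))
    {F : Type u} [CommRing F] [Algebra B F] (q : PrimeSpectrum F)
    (hq : q.asIdeal.comap (algebraMap B F) = Q.asIdeal)
    (hsurj : ∀ f : F, ∃ b w : B, IsUnit (algebraMap B F w) ∧ f * algebraMap B F w = algebraMap B F b)
    (hker : ∀ b : B, algebraMap B F b = 0 →
      ∃ w : B, IsUnit (algebraMap B F w) ∧ w * b ∈ P.asIdeal.map (algebraMap A B))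
    (hp : ∀ a ∈ P.asIdeal, algebraMap B F (algebraMap A B a) = 0)
    {N' : Type u} [AddCommGroup N'] [Module F N'] (eF : F ⊗[B] N ≃ₗ[F] N')
    (hQ : Q ∈ Module.support B (N ⊗[A] M)) :
    P ∈ Module.support A M ∧ q ∈ Module.support F N' ∧
      heightAt B (N ⊗[A] M) Q ≤ heightAt A M P + heightAt F N' q ∧
      depthAt A M P + depthAt F N' q ≤ depthAt B (N ⊗[A] M) Q := by
  let R := Localization.AtPrime P.asIdeal
  let S := Localization.AtPrime Q.asIdeal
  let T := Localization.AtPrime q.asIdeal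
  let : Algebra R S := (Localization.localRingHom P.asIdeal Q.asIdeal (algebraMap A B) hPQ).toAlgebra
  let : Algebra S T :=
    (Localization.localRingHom Q.asIdeal q.asIdeal (algebraMap B F) hq.symm).toAlgebra
  have : IsLocalHom (algebraMap R S) :=
    Localization.isLocalHom_localRingHom P.asIdeal Q.asIdeal (algebraMap A B) hPQ
  have : IsScalarTower A R S := .of_algebraMap_eq fun a ↦
    (Localization.localRingHom_to_map P.asIdeal Q.asIdeal (algebraMap A B) hPQ a).symm
  have : IsScalarTower B S T := .of_algebraMap_eq fun b ↦
    (Localization.localRingHom_to_map Q.asIdeal q.asIdeal (algebraMap B F) hq.symm b).symm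
  have : SMulCommClass B R S := ⟨fun b r s ↦ by simp only [Algebra.smul_def, mul_left_comm]⟩
  have hST : Function.Surjective (algebraMap S T) :=
    algebraMap_surjective_of_fiber Q.asIdeal q.asIdeal hq hsurj
  have hkerST : RingHom.ker (algebraMap S T) = (maximalIdeal R).map (algebraMap R S) := by
    rw [ker_algebraMap_of_fiber P.asIdeal Q.asIdeal q.asIdeal hq hsurj hker hp,
      ← Localization.AtPrime.map_eq_maximalIdeal, Ideal.map_map, ← IsScalarTower.algebraMap_eq]
  have : Module.Flat R (S ⊗[B] N) := by
    rw [Module.flat_iff_of_isLocalization R P.asIdeal.primeCompl]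
    exact flat_tensor_of_flat
  let K := LocalizedModule q.asIdeal.primeCompl N'
  let : Module S K := Module.compHom K (algebraMap S T)
  have : IsScalarTower S T K := ⟨fun s t k ↦ by
    rw [Algebra.smul_def, mul_smul]; rfl⟩
  let eK : T ⊗[S] (S ⊗[B] N) ≃ₗ[T] K :=
    AlgebraTensorModule.cancelBaseChange B S T T N ≪≫ₗ
      (AlgebraTensorModule.cancelBaseChange B F T T N).symm ≪≫ₗ
      AlgebraTensorModule.congr (.refl T T) eF ≪≫ₗ
      (LocalizedModule.equivTensorProduct q.asIdeal.primeCompl N').symm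
  let e : K ≃ₗ[S] (S ⊗[B] N) ⧸ ((maximalIdeal R).map (algebraMap R S) • (⊤ : Submodule S _)) :=
    (eK.restrictScalars S).symm ≪≫ₗ tensorEquivQuotientOfSurjective hST hkerST _
  let eM : LocalizedModule P.asIdeal.primeCompl M ≃ₗ[R] R ⊗[A] M :=
    LocalizedModule.equivTensorProduct _ _
  let eNM : (S ⊗[B] N) ⊗[R] (R ⊗[A] M) ≃ₗ[S] LocalizedModule Q.asIdeal.primeCompl (N ⊗[A] M) :=
    tensorBaseChangeEquiv A B R S N M ≪≫ₗ (LocalizedModule.equivTensorProduct _ _).symm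
  have : Nontrivial (LocalizedModule Q.asIdeal.primeCompl (N ⊗[A] M)) :=
    Module.mem_support_iff.mp hQ
  have hNM : Nontrivial ((S ⊗[B] N) ⊗[R] (R ⊗[A] M)) := eNM.toEquiv.nontrivial
  have hRM : Nontrivial (R ⊗[A] M) := by
    by_contra! h
    exact not_subsingleton ((S ⊗[B] N) ⊗[R] (R ⊗[A] M)) inferInstance
  have hSN : Nontrivial (S ⊗[B] N) := by
    by_contra! h
    exact not_subsingleton ((S ⊗[B] N) ⊗[R] (R ⊗[A] M)) inferInstance
  have hK : Nontrivial K := by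
    refine e.toEquiv.nontrivial_congr.mpr (Submodule.Quotient.nontrivial_iff.mpr fun h ↦ ?_)
    refine top_ne_bot (α := Submodule S (S ⊗[B] N)) (Submodule.eq_bot_of_le_smul_of_le_jacobson_bot
      ((maximalIdeal R).map (algebraMap R S)) ⊤ Module.Finite.fg_top h.ge ?_)
    rw [IsLocalRing.jacobson_eq_maximalIdeal ⊥ bot_ne_top]
    exact map_maximalIdeal_le _
  refine ⟨Module.mem_support_iff.mpr eM.toEquiv.nontrivial, Module.mem_support_iff.mpr hK, ?_, ?_⟩
  · calc heightAt B (N ⊗[A] M) Q = supportDim S ((S ⊗[B] N) ⊗[R] (R ⊗[A] M)) :=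
          (Module.supportDim_eq_of_equiv eNM).symm
      _ ≤ supportDim R (R ⊗[A] M) + supportDim T K := supportDim_tensor_le e hST
      _ = heightAt A M P + heightAt F N' q :=
          congrArg (· + supportDim T K) (Module.supportDim_eq_of_equiv eM).symm
  · calc depthAt A M P + depthAt F N' q = localDepth R (R ⊗[A] M) + localDepth T K :=
          congrArg (· + localDepth T K) (localDepth_congr eM)
      _ ≤ localDepth S ((S ⊗[B] N) ⊗[R] (R ⊗[A] M)) :=
          localDepth_add_localDepth_le_localDepth_tensor e hST
      _ = depthAt B (N ⊗[A] M) Q := localDepth_congr eNM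

theorem condC_tensor (hM : CondC A n M)
    (hfib : ∀ P ∈ Module.support A M, SerreCondS (fiberRing A B P) n (fiberModule A B P N)) :
    CondC B n (N ⊗[A] M) := by
  intro Q hQ
  obtain ⟨q, hq⟩ := exists_comap_quotient_fiberIdeal_eq (A := A) Q
  obtain ⟨hP, hq', hdim, hdepth⟩ := heightAt_le_and_le_depthAt_of_fiber (M := M) (N := N) Q
    (Q.comap (algebraMap A B)) rfl q hq (exists_mul_algebraMap_quotient_fiberIdeal _)
    (exists_mul_mem_map_of_algebraMap_quotient_fiberIdeal_eq_zero _)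
    (fun _ ↦ algebraMap_quotient_fiberIdeal_eq_zero _) (tensorEquivFiberModule _ N) hQ
  refine min_le_add_one_of_le_add hdim hdepth ?_ ?_ (hM _ hP) (hfib _ hP q hq')
  · have := Module.mem_support_iff.mp hP
    exact Order.krullDim_nonneg_iff.mpr (Module.nonempty_support_iff.mpr this).to_subtype
  · have := Module.mem_support_iff.mp hq'
    exact Order.krullDim_nonneg_iff.mpr (Module.nonempty_support_iff.mpr this).to_subtype

/-- The commutativity of the tensor product is linear for the `B`-action on `N`. -/
def tensorRightComm (A B M N : Type u) [CommRing A] [CommRing B] [Algebra A B]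
    [AddCommGroup M] [Module A M] [AddCommGroup N] [Module A N] [Module B N] [IsScalarTower A B N] :
    letI := tensorRightModule A B M N
    N ⊗[A] M ≃ₗ[B] M ⊗[A] N :=
  letI := tensorRightModule A B M N
  { TensorProduct.comm A N M with
    map_smul' b x := by
      change TensorProduct.comm A N M (b • x) = (TensorProduct.comm A M N).symm
        (b • TensorProduct.comm A M N (TensorProduct.comm A N M x))
      simp }

end

end

theorem tensor_condC_of_condC_base_serreS_fibers (A B : Type u) [CommRing A] [CommRing B] [IsNoetherianRing A] [IsNoetherianRing B]
    [Algebra A B] (n : ℕ)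
    (M : Type u) [AddCommGroup M] [Module A M] [Module.Finite A M]
    (N : Type u) [AddCommGroup N] [Module A N] [Module B N] [IsScalarTower A B N]
    [Module.Finite B N] [Module.Flat A N]
    (hM : CondC A n M)
    (hfib : ∀ P ∈ Module.support A M, SerreCondS (fiberRing A B P) n (fiberModule A B P N)) :
    CondC B n (M ⊗[A] N) :=
  (condC_tensor hM hfib).congr (tensorRightComm A B M N)

end
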